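/- For every integer m ≥ 5, the following strict inequality chain holds: m/(m-2) > 1 > 1 - 4 m Γ(m/2)² / ((m-1)² π Γ((m-1)/2)²). That is, the variance m/(m-2) of the Student-t distribution with m degrees of freedom (which models the Adam update when the correlation between numerator and denominator is ignored) strictly exceeds 1, the true variance of the update, which in turn strictly exceeds the variance of the magnitude of the update; moreover both outer quantities converge to 1 and to 1 - 2/π respectively as m → ∞, so the variance of the t-distribution decreases to 1 while the variance of the magnitude increases. -/

import Mathlib

/-- The variance of `|Δθ|` for the Adam update at time step `m` with i.i.d. standard normal
gradients: `v m = 1 - 4 m Γ(m/2)² / ((m-1)² π Γ((m-1)/2)²)`. -/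
noncomputable def absUpdateVariance (m : ℕ) : ℝ :=
  1 - 4 * m * Real.Gamma ((m : ℝ) / 2) ^ 2 /
    (((m : ℝ) - 1) ^ 2 * Real.pi * Real.Gamma (((m : ℝ) - 1) / 2) ^ 2)

/-- The variance `m/(m-2)` of the Student-t distribution with `m` degrees of freedom, which
models the Adam update when the correlation between numerator and denominator is ignored. -/
noncomputable def tVariance (m : ℕ) : ℝ := (m : ℝ) / ((m : ℝ) - 2)

/-!
For `m ≥ 2` the magnitude variance is `1 - (2 / π) F (m / 2)`, where
`F x = x (Γ(x) / Γ(x + 1/2))²`. Log-convexity of `Γ` at the midpoints of `[x, x + 1]` and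
`[x + 1/2, x + 3/2]` gives `1 ≤ F x ≤ 1 + 1 / (2x)`, hence the limit. For monotonicity,
`F (x + 1) / F x = 1 - 1 / (2x + 1)²` increases with `x`, so for every `h > 0` the quotient
`F x / F (x + h)` decreases strictly under `x ↦ x + 1`; as it tends to `1`, it exceeds `1`.
-/

open Filter Real Set Topology

theorem lt_of_tendsto_of_add_one_lt {α : Type*} [TopologicalSpace α] [Preorder α]
    [OrderClosedTopology α] {f : ℝ → α} {l : α} {a : ℝ} (hlim : Tendsto f atTop (𝓝 l))
    (hstep : ∀ x, a < x → f (x + 1) < f x) {x : ℝ} (hx : a < x) : l < f x := by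
  have hanti : StrictAnti fun n : ℕ => f (x + n) := by
    refine strictAnti_nat_of_succ_lt fun n => ?_
    have hxn : a < x + n := lt_add_of_lt_of_nonneg hx n.cast_nonneg
    simpa only [Nat.cast_succ, add_assoc] using hstep (x + n) hxn
  have hlim_nat : Tendsto (fun n : ℕ => f (x + n)) atTop (𝓝 l) :=
    hlim.comp (tendsto_atTop_add_const_left _ x tendsto_natCast_atTop_atTop)
  calc l ≤ f (x + (1 : ℕ)) := hanti.antitone.le_of_tendsto hlim_nat 1
    _ < f (x + (0 : ℕ)) := hanti one_pos
    _ = f x := by simp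

theorem sq_Gamma_midpoint_le_mul {s t : ℝ} (hs : 0 < s) (ht : 0 < t) :
    Gamma ((s + t) / 2) ^ 2 ≤ Gamma s * Gamma t := by
  have hconv := Gamma_mul_add_mul_le_rpow_Gamma_mul_rpow_Gamma hs ht
    one_half_pos one_half_pos (add_halves 1)
  rw [← sqrt_eq_rpow, ← sqrt_eq_rpow, ← sqrt_mul (Gamma_nonneg_of_nonneg hs.le)] at hconv
  have hmid : (s + t) / 2 = 1 / 2 * s + 1 / 2 * t := by ring
  rw [hmid]
  exact (le_sqrt' (Gamma_pos_of_pos (by positivity))).1 hconv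

theorem sq_Gamma_add_half_le_mul {x : ℝ} (hx : 0 < x) :
    Gamma (x + 1 / 2) ^ 2 ≤ x * Gamma x ^ 2 :=
  calc Gamma (x + 1 / 2) ^ 2 = Gamma ((x + (x + 1)) / 2) ^ 2 := by ring_nf
    _ ≤ Gamma x * Gamma (x + 1) := sq_Gamma_midpoint_le_mul hx (by positivity)
    _ = x * Gamma x ^ 2 := by rw [Gamma_add_one hx.ne']; ring

/-- The squared Wallis ratio `(Γ(x) / Γ(x + 1/2))²`, normalised by the factor `x` that makes it
tend to `1` at infinity. At `x = m / 2` it governs the variance of the magnitude of the Adam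
update. -/
noncomputable def wallisRatio (x : ℝ) : ℝ := x * (Gamma x / Gamma (x + 1 / 2)) ^ 2

section WallisRatio

variable {x : ℝ}

theorem one_le_wallisRatio (hx : 0 < x) : 1 ≤ wallisRatio x := by
  have : 0 < Gamma (x + 1 / 2) := Gamma_pos_of_pos (by positivity)
  rw [wallisRatio, div_pow, ← mul_div_assoc, one_le_div (by positivity)]
  exact sq_Gamma_add_half_le_mul hx

theorem wallisRatio_pos (hx : 0 < x) : 0 < wallisRatio x :=
  one_pos.trans_le (one_le_wallisRatio hx)

theorem wallisRatio_le_one_add (hx : 0 < x) : wallisRatio x ≤ 1 + 1 / (2 * x) := by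
  have : 0 < Gamma (x + 1 / 2) := Gamma_pos_of_pos (by positivity)
  have hΓ_bound : x ^ 2 * Gamma x ^ 2 ≤ (x + 1 / 2) * Gamma (x + 1 / 2) ^ 2 :=
    calc x ^ 2 * Gamma x ^ 2 = Gamma (x + 1 / 2 + 1 / 2) ^ 2 := by
          rw [add_assoc, add_halves, Gamma_add_one hx.ne', mul_pow]
      _ ≤ (x + 1 / 2) * Gamma (x + 1 / 2) ^ 2 := sq_Gamma_add_half_le_mul (by positivity)
  calc wallisRatio x = x ^ 2 * Gamma x ^ 2 / (x * Gamma (x + 1 / 2) ^ 2) := by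
        rw [wallisRatio]; field_simp
    _ ≤ (x + 1 / 2) * Gamma (x + 1 / 2) ^ 2 / (x * Gamma (x + 1 / 2) ^ 2) := by gcongr
    _ = 1 + 1 / (2 * x) := by field_simp

theorem tendsto_wallisRatio : Tendsto wallisRatio atTop (𝓝 1) := by
  have hupper : Tendsto (fun x : ℝ => 1 + 1 / (2 * x)) atTop (𝓝 1) := by
    simpa using ((tendsto_id.const_mul_atTop (two_pos (α := ℝ))).const_div_atTop 1).const_add 1
  refine tendsto_of_tendsto_of_tendsto_of_le_of_le' tendsto_const_nhds hupper ?_ ?_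
  · filter_upwards [eventually_gt_atTop 0] with x hx using one_le_wallisRatio hx
  · filter_upwards [eventually_gt_atTop 0] with x hx using wallisRatio_le_one_add hx

theorem wallisRatio_add_one (hx : 0 < x) :
    wallisRatio (x + 1) = (1 - 1 / (2 * x + 1) ^ 2) * wallisRatio x := by
  have : 0 < Gamma (x + 1 / 2) := Gamma_pos_of_pos (by positivity)
  rw [wallisRatio, wallisRatio, add_right_comm, Gamma_add_one hx.ne',
    Gamma_add_one (by positivity : x + 1 / 2 ≠ 0)]
  field_simp
  ring

theorem wallisRatio_div_add_one_lt {h : ℝ} (hh : 0 < h) (hx : 0 < x) :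
    wallisRatio (x + 1) / wallisRatio (x + 1 + h) < wallisRatio x / wallisRatio (x + h) := by
  have hxh : 0 < x + h := by positivity
  have hfactor : 1 - 1 / (2 * x + 1) ^ 2 < 1 - 1 / (2 * (x + h) + 1) ^ 2 := by
    gcongr
    linarith
  have hcross : 0 < wallisRatio x * wallisRatio (x + h) :=
    mul_pos (wallisRatio_pos hx) (wallisRatio_pos hxh)
  rw [add_right_comm x 1 h,
    div_lt_div_iff₀ (wallisRatio_pos (by positivity)) (wallisRatio_pos hxh),
    wallisRatio_add_one hx, wallisRatio_add_one hxh]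
  linarith [mul_lt_mul_of_pos_right hfactor hcross]

theorem strictAntiOn_wallisRatio : StrictAntiOn wallisRatio (Ioi 0) := by
  intro x hx y hy hxy
  have hlim : Tendsto (fun z => wallisRatio z / wallisRatio (z + (y - x))) atTop (𝓝 1) := by
    have hshift : Tendsto (fun z => wallisRatio (z + (y - x))) atTop (𝓝 1) :=
      tendsto_wallisRatio.comp (tendsto_atTop_add_const_right _ (y - x) tendsto_id)
    simpa only [Pi.div_def, div_one] using tendsto_wallisRatio.div hshift one_ne_zero
  have hquot : 1 < wallisRatio x / wallisRatio (x + (y - x)) :=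
    lt_of_tendsto_of_add_one_lt hlim
      (fun z hz => wallisRatio_div_add_one_lt (sub_pos.2 hxy) hz) hx
  rwa [add_sub_cancel, one_lt_div (wallisRatio_pos hy)] at hquot

end WallisRatio

theorem absUpdateVariance_eq_one_sub {m : ℕ} (hm : 2 ≤ m) :
    absUpdateVariance m = 1 - 2 / π * wallisRatio (m / 2) := by
  have hm_pos : 0 < (m : ℝ) - 1 := by
    have : (2 : ℝ) ≤ m := mod_cast hm
    linarith
  have : 0 < Gamma (((m : ℝ) - 1) / 2) := Gamma_pos_of_pos (by positivity)
  have hshift : (m : ℝ) / 2 + 1 / 2 = ((m : ℝ) - 1) / 2 + 1 := by ring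
  rw [absUpdateVariance, wallisRatio, hshift, Gamma_add_one (by positivity)]
  field_simp
  ring

theorem absUpdateVariance_lt_one {m : ℕ} (hm : 2 ≤ m) : absUpdateVariance m < 1 := by
  rw [absUpdateVariance_eq_one_sub hm]
  have hW : 0 < wallisRatio (m / 2) := wallisRatio_pos (by positivity)
  exact sub_lt_self 1 (by positivity)

theorem tendsto_absUpdateVariance : Tendsto absUpdateVariance atTop (𝓝 (1 - 2 / π)) := by
  have hW : Tendsto (fun m : ℕ => wallisRatio (m / 2)) atTop (𝓝 1) :=
    tendsto_wallisRatio.comp (tendsto_natCast_atTop_atTop.atTop_div_const two_pos)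
  have hlim : Tendsto (fun m : ℕ => 1 - 2 / π * wallisRatio (m / 2)) atTop (𝓝 (1 - 2 / π)) := by
    simpa using (hW.const_mul (2 / π)).const_sub 1
  refine hlim.congr' ?_
  filter_upwards [eventually_ge_atTop 2] with m hm using (absUpdateVariance_eq_one_sub hm).symm

theorem strictMonoOn_absUpdateVariance : StrictMonoOn absUpdateVariance (Ici 2) := by
  intro m (hm : 2 ≤ m) n (hn : 2 ≤ n) hmn
  have hW : wallisRatio (n / 2) < wallisRatio (m / 2) :=
    strictAntiOn_wallisRatio (mem_Ioi.2 (by positivity)) (mem_Ioi.2 (by positivity)) (by gcongr)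
  rw [absUpdateVariance_eq_one_sub hm, absUpdateVariance_eq_one_sub hn]
  gcongr

theorem tVariance_eq_one_add {m : ℕ} (hm : 3 ≤ m) : tVariance m = 1 + 2 / ((m : ℝ) - 2) := by
  have hm_ne : (m : ℝ) - 2 ≠ 0 := by
    have : (3 : ℝ) ≤ m := mod_cast hm
    linarith
  rw [tVariance]
  field_simp
  ring

theorem one_lt_tVariance {m : ℕ} (hm : 3 ≤ m) : 1 < tVariance m := by
  have hm_gt : (2 : ℝ) < m := mod_cast hm
  rw [tVariance_eq_one_add hm]
  exact lt_add_of_pos_right 1 (div_pos two_pos (sub_pos.2 hm_gt))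

theorem tendsto_tVariance : Tendsto tVariance atTop (𝓝 1) := by
  refine (tendsto_natCast_div_add_atTop (-2 : ℝ)).congr fun m => ?_
  rw [tVariance, sub_eq_add_neg]

theorem strictAntiOn_tVariance : StrictAntiOn tVariance (Ici 3) := by
  intro m (hm : 3 ≤ m) n (hn : 3 ≤ n) hmn
  have hm_gt : (2 : ℝ) < m := mod_cast hm
  have : 0 < (m : ℝ) - 2 := sub_pos.2 hm_gt
  rw [tVariance_eq_one_add hm, tVariance_eq_one_add hn]
  gcongr

theorem tVariance_gt_one_gt_absUpdateVariance_general :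
    (∀ m : ℕ, 3 ≤ m → 1 < tVariance m) ∧ (∀ m : ℕ, 2 ≤ m → absUpdateVariance m < 1) ∧
      Tendsto tVariance atTop (𝓝 1) ∧ Tendsto absUpdateVariance atTop (𝓝 (1 - 2 / π)) ∧
      StrictAntiOn tVariance (Ici 3) ∧ StrictMonoOn absUpdateVariance (Ici 2) :=
  ⟨fun _ => one_lt_tVariance, fun _ => absUpdateVariance_lt_one, tendsto_tVariance,
    tendsto_absUpdateVariance, strictAntiOn_tVariance, strictMonoOn_absUpdateVariance⟩

/-- For every `m ≥ 5` the strict chain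
`m/(m-2) > 1 > 1 - 4 m Γ(m/2)² / ((m-1)² π Γ((m-1)/2)²)` holds: the Student-t variance
exceeds the true update variance `1`, which exceeds the variance of the update magnitude.
Moreover `m/(m-2) → 1` and the magnitude variance `→ 1 - 2/π` as `m → ∞`, the Student-t
variance strictly decreasing and the magnitude variance strictly increasing. -/
theorem tVariance_gt_one_gt_absUpdateVariance :
    (∀ m : ℕ, 5 ≤ m → tVariance m > 1 ∧ 1 > absUpdateVariance m) ∧
      Filter.Tendsto (fun m : ℕ => tVariance m) Filter.atTop (nhds 1) ∧
      Filter.Tendsto (fun m : ℕ => absUpdateVariance m) Filter.atTop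
        (nhds (1 - 2 / Real.pi)) ∧
      (∀ m : ℕ, 5 ≤ m → tVariance (m + 1) < tVariance m) ∧
      (∀ m : ℕ, 5 ≤ m → absUpdateVariance (m + 1) > absUpdateVariance m) := by
  obtain ⟨ht_gt, hv_lt, ht_lim, hv_lim, ht_anti, hv_mono⟩ :=
    tVariance_gt_one_gt_absUpdateVariance_general
  exact ⟨fun m hm => ⟨ht_gt m (by lia), hv_lt m (by lia)⟩, ht_lim, hv_lim,
    fun m hm => ht_anti (mem_Ici.2 (by lia)) (mem_Ici.2 (by lia)) m.lt_succ_self,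
    fun m hm => hv_mono (mem_Ici.2 (by lia)) (mem_Ici.2 (by lia)) m.lt_succ_self⟩
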